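/- arXiv:2111.07399 — 2 statements merged into one kernel-verified Lean document; each statement's English description precedes it below -/
import Mathlib

section
/- Let G be a connected graph on ℕ with uniformly bounded degree which is non-singular (the bounded adjacency operator A on ℓ²(ℕ), (A v)_k = ∑_i a_{ki} v_i, has trivial kernel). Let f : ℓ²(ℕ) → ℓ²(ℕ) be an isomorphism of Hilbert evolution algebras from A_RW(G) to A(G), i.e. a continuous linear bijection with continuous inverse satisfying f(v ∘ w) = f(v) ⋆ f(w) for all v, w. Then there exist a bijection π : ℕ → ℕ and scalars α_i ≠ 0 such that f(δ_i) = α_i δ_{π(i)} for every i ∈ ℕ; moreover there exists M > 0 with |α_i| ≤ M for all i ∈ ℕ. -/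
/-!
Distinct basis vectors multiply to zero in `A_RW(G)`, so `f δ_i ⋆ f δ_j = 0` for `i ≠ j`. That
product is the adjacency operator applied to the pointwise product of `f δ_i` and `f δ_j`, so
non-singularity makes the pointwise product vanish: the vectors `f δ_i` have pairwise disjoint
supports (`image_mul_eq_zero`).

Continuity gives `(f u)_m = ∑ i, u_i (f δ_i)_m`. By surjectivity each `m` lies in the support of
some `f δ_i`, and by disjointness of exactly one, `i = σ m`; hence
`(f u)_m = u_{σ m} (f δ_{σ m})_m`. Taking `f u = δ_k` shows that `σ` is injective, and `f δ_i ≠ 0`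
shows that it is surjective. So `f δ_i` is supported on the single point `σ⁻¹ i`, and its
coefficient there is bounded by `‖f‖`.

The hypothesis on `f` applies only when the product `f v ⋆ f w` is known to be an element of `ℓ²`;
`exists_isStarProd` supplies this from the bound on the degrees.
-/

noncomputable section
open scoped ENNReal

/-- The real Hilbert space ℓ²(ℕ) of square-summable sequences. -/
abbrev l2 : Type := lp (fun _ : ℕ => ℝ) 2

/-- The degree of vertex `i` in the graph with adjacency coefficients `a`. -/
def deg (a : ℕ → ℕ → ℝ) (i : ℕ) : ℝ := ∑' k, a k i

/-- `a` is the adjacency function of a simple graph (0/1-valued, symmetric, no loops). -/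
def SimpleAdj (a : ℕ → ℕ → ℝ) : Prop :=
  (∀ k i, a k i = 0 ∨ a k i = 1) ∧ (∀ k i, a k i = a i k) ∧ (∀ i, a i i = 0)

/-- The graph is connected: any two vertices are joined by a finite path of edges. -/
def Connected (a : ℕ → ℕ → ℝ) : Prop :=
  ∀ i j : ℕ, Relation.ReflTransGen (fun x y => a x y = 1) i j

/-- The graph is locally finite: every degree series converges. -/
def GraphLocallyFinite (a : ℕ → ℕ → ℝ) : Prop := ∀ i, Summable fun k => a k i

/-- The graph has uniformly bounded degree. -/
def UnifBoundedDegree (a : ℕ → ℕ → ℝ) : Prop := ∃ M > 0, ∀ i, deg a i ≤ M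

/-- The graph is regular: all degrees are equal. -/
def GraphRegular (a : ℕ → ℕ → ℝ) : Prop := ∃ d : ℝ, ∀ i, deg a i = d

/-- The graph is biregular: the vertex set splits as `V₁ ⊔ V₂` with every edge joining `V₁`
to `V₂` and constant degrees `d₁` on `V₁` and `d₂` on `V₂`. -/
def GraphBiregular (a : ℕ → ℕ → ℝ) : Prop :=
  ∃ (V₁ : Set ℕ) (d₁ d₂ : ℝ),
    (∀ i ∈ V₁, deg a i = d₁) ∧ (∀ i ∉ V₁, deg a i = d₂) ∧
    ∀ i k, a k i = 1 → ((i ∈ V₁ ∧ k ∉ V₁) ∨ (i ∉ V₁ ∧ k ∈ V₁))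

/-- `p` is the product `v ⋆ w` in the Hilbert evolution algebra `A(G)`:
`p_k = ∑_i v_i w_i a_{ki}` with all series convergent. -/
def IsStarProd (a : ℕ → ℕ → ℝ) (v w p : l2) : Prop :=
  (∀ k, Summable fun i => v i * w i * a k i) ∧
  ∀ k, p k = ∑' i, v i * w i * a k i

/-- `p` is the product `v ∘ w` in the Hilbert evolution algebra `A_RW(G)`:
`p_k = ∑_i v_i w_i a_{ki}/deg(i)` with all series convergent. -/
def IsRWProd (a : ℕ → ℕ → ℝ) (v w p : l2) : Prop :=
  (∀ k, Summable fun i => v i * w i * (a k i / deg a i)) ∧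
  ∀ k, p k = ∑' i, v i * w i * (a k i / deg a i)

/-- The graph is non-singular: the adjacency operator `(A v)_k = ∑_i a_{ki} v_i` on ℓ²(ℕ)
has trivial kernel. -/
def NonSingular (a : ℕ → ℕ → ℝ) : Prop :=
  ∀ v : l2, (∀ k, ∑' i, a k i * v i = 0) → v = 0

/-- The standard orthonormal basis vector `δ_i` of ℓ²(ℕ). -/
def delta (i : ℕ) : l2 := lp.single 2 i (1 : ℝ)

lemma delta_apply (i k : ℕ) : (delta i) k = if k = i then (1 : ℝ) else 0 := by
  by_cases h : k = i
  · subst h; simp [delta]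
  · simp [delta, h]

lemma norm_delta (i : ℕ) : ‖delta i‖ = 1 := by
  simp [delta, lp.norm_single]

lemma evalCLM_apply (k : ℕ) (v : l2) : lp.evalCLM ℝ (fun _ : ℕ => ℝ) 2 k v = v k := rfl

lemma summable_sq (v : l2) : Summable fun i => v i ^ 2 := by
  have h := (lp.memℓp v).summable (by norm_num)
  simpa using h

lemma summable_abs_mul (v w : l2) : Summable fun i => |v i * w i| := by
  refine Summable.of_nonneg_of_le (fun i => abs_nonneg _) (fun i => ?_)
    ((summable_sq v).add (summable_sq w))
  rw [abs_mul, ← sq_abs (v i), ← sq_abs (w i)]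
  nlinarith [sq_nonneg (|v i| - |w i|), abs_nonneg (v i), abs_nonneg (w i)]

/-- The pointwise product of two `ℓ²` sequences is again in `ℓ²`. -/
lemma exists_pointwise_mul (v w : l2) : ∃ u : l2, ∀ i, u i = v i * w i := by
  have h1 : Memℓp (fun i => v i * w i) 1 := by
    apply memℓp_gen
    simpa [abs_mul] using summable_abs_mul v w
  exact ⟨⟨_, h1.of_exponent_ge (by norm_num)⟩, fun i => rfl⟩

/-- The `i`-th column of the adjacency matrix is an `ℓ²` vector of squared norm `deg i`. -/
lemma exists_column {a : ℕ → ℕ → ℝ} (hadj : SimpleAdj a) (hlf : GraphLocallyFinite a) (i : ℕ) :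
    ∃ c : l2, (∀ k, c k = a k i) ∧ ‖c‖ ^ 2 = deg a i := by
  have hsq : ∀ k, a k i ^ 2 = a k i := fun k => by
    rcases hadj.1 k i with h | h <;> simp [h]
  have h : Memℓp (fun k => a k i) 2 := by
    apply memℓp_gen
    simpa [hsq] using hlf i
  refine ⟨⟨_, h⟩, fun k => rfl, ?_⟩
  have := lp.norm_rpow_eq_tsum (p := 2) (by norm_num) (⟨_, h⟩ : l2)
  simpa [hsq, deg] using this

/-- Bounded degree makes `A(G)` closed under its product: `v ⋆ w` is the absolutely convergent
series `∑ i, (v_i w_i) c_i` in `ℓ²`, where `c_i` is the `i`-th column of the adjacency matrix. -/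
lemma exists_isStarProd {a : ℕ → ℕ → ℝ} (hadj : SimpleAdj a) (hlf : GraphLocallyFinite a)
    (hubd : UnifBoundedDegree a) (v w : l2) : ∃ q : l2, IsStarProd a v w q := by
  obtain ⟨M, hM, hdeg⟩ := hubd
  choose c hc hcn using exists_column hadj hlf
  have hcb : ∀ i, ‖c i‖ ≤ √M := fun i =>
    Real.le_sqrt_of_sq_le ((hcn i).trans_le (hdeg i))
  have hs : Summable fun i => (v i * w i) • c i := by
    apply Summable.of_norm
    refine Summable.of_nonneg_of_le (fun i => norm_nonneg _) (fun i => ?_)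
      ((summable_abs_mul v w).mul_right (√M))
    rw [norm_smul, Real.norm_eq_abs]
    exact mul_le_mul_of_nonneg_left (hcb i) (abs_nonneg _)
  have hk : ∀ k, HasSum (fun i => v i * w i * a k i) ((∑' i, (v i * w i) • c i : l2) k) := by
    intro k
    have := hs.hasSum.mapL (lp.evalCLM ℝ (fun _ : ℕ => ℝ) 2 k)
    simpa [evalCLM_apply, hc] using this
  exact ⟨_, fun k => (hk k).summable, fun k => (hk k).tsum_eq.symm⟩

/-- The images of distinct basis vectors have disjoint supports. -/
lemma image_mul_eq_zero {a : ℕ → ℕ → ℝ}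
    (hadj : SimpleAdj a) (hlf : GraphLocallyFinite a) (hubd : UnifBoundedDegree a)
    (hns : NonSingular a) (f : l2 ≃L[ℝ] l2)
    (hf : ∀ v w p q : l2, IsRWProd a v w p → IsStarProd a (f v) (f w) q → f p = q)
    {i j : ℕ} (hij : i ≠ j) (m : ℕ) : f (delta i) m * f (delta j) m = 0 := by
  obtain ⟨q, hq⟩ := exists_isStarProd hadj hlf hubd (f (delta i)) (f (delta j))
  have hz : ∀ k, delta i k * delta j k = 0 := fun k => by
    rw [delta_apply, delta_apply]
    split_ifs <;> simp_all
  have hp : IsRWProd a (delta i) (delta j) 0 := by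
    constructor <;> intro k <;> simp [hz, summable_zero]
  have hq0 : q = 0 := by rw [← hf _ _ _ _ hp hq, map_zero]
  obtain ⟨u, hu⟩ := exists_pointwise_mul (f (delta i)) (f (delta j))
  have hu0 : u = 0 := by
    apply hns
    intro k
    have := hq.2 k
    rw [hq0] at this
    simp only [hu, mul_comm (a k _)]
    simpa using this.symm
  rw [← hu, hu0]
  rfl

lemma hasSum_image (f : l2 ≃L[ℝ] l2) (u : l2) (m : ℕ) :
    HasSum (fun i => u i * f (delta i) m) (f u m) := by
  have h := lp.hasSum_single (p := 2) (by norm_num) u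
  have h2 := (h.mapL (f : l2 →L[ℝ] l2)).mapL (lp.evalCLM ℝ (fun _ : ℕ => ℝ) 2 m)
  have hsm : ∀ i, lp.single 2 i (u i) = u i • delta i := fun i => by
    rw [delta, ← lp.single_smul]; simp
  simpa [hsm, evalCLM_apply] using h2

/-- for a connected non-singular graph with uniformly bounded degree, every
isomorphism `f` of Hilbert evolution algebras from `A_RW(G)` to `A(G)` acts on the
standard basis by `f(δ_i) = α_i δ_{π(i)}` for some bijection `π` of ℕ and nonzero scalars
`α_i`, which are moreover uniformly bounded. -/
theorem iso_is_weighted_permutation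
    (a : ℕ → ℕ → ℝ)
    (hadj : SimpleAdj a) (hconn : Connected a)
    (hlf : GraphLocallyFinite a) (hubd : UnifBoundedDegree a)
    (hns : NonSingular a)
    (f : l2 ≃L[ℝ] l2)
    (hf : ∀ v w p q : l2, IsRWProd a v w p → IsStarProd a (f v) (f w) q → f p = q) :
    ∃ (π : Equiv.Perm ℕ) (α : ℕ → ℝ),
      (∀ i, α i ≠ 0) ∧
      (∀ i, f (delta i) = α i • delta (π i)) ∧
      ∃ M > 0, ∀ i, |α i| ≤ M := by
  have hdisj := @image_mul_eq_zero a hadj hlf hubd hns f hf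
  have hex : ∀ m, ∃ i, f (delta i) m ≠ 0 := by
    intro m
    by_contra! h
    have := hasSum_image f (f.symm (delta m)) m
    simp [h, delta_apply] at this
    exact zero_ne_one (hasSum_zero.unique this)
  choose σ hσ using hex
  have huniq : ∀ m i, i ≠ σ m → f (delta i) m = 0 := fun m i hi =>
    (mul_eq_zero.mp (hdisj hi m)).resolve_right (hσ m)
  have hval : ∀ u : l2, ∀ m, f u m = u (σ m) * f (delta (σ m)) m := fun u m =>
    (hasSum_image f u m).unique
      (hasSum_single (σ m) fun i hi => by rw [huniq m i hi, mul_zero])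
  have hinj : Function.Injective σ := by
    intro m k hmk
    by_contra hne
    -- With `f u = δ_k`, coordinate `m` forces `u_{σ m} = 0` and coordinate `k` forces `u_{σ k} ≠ 0`.
    have h1 := hval (f.symm (delta k)) m
    have h2 := hval (f.symm (delta k)) k
    rw [f.apply_symm_apply, delta_apply, if_neg hne, eq_comm, mul_eq_zero] at h1
    rw [f.apply_symm_apply, delta_apply, if_pos rfl, ← hmk,
      h1.resolve_right (hσ m), zero_mul] at h2
    exact one_ne_zero h2
  have hsurj : Function.Surjective σ := by
    intro i
    by_contra! h
    have h0 : f (delta i) = 0 := by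
      ext m
      exact huniq m i (h m).symm
    have hd : delta i = 0 := f.map_eq_zero_iff.mp h0
    have := norm_delta i
    simp [hd] at this
  let e : Equiv.Perm ℕ := Equiv.ofBijective σ ⟨hinj, hsurj⟩
  have he : ∀ i, σ (e.symm i) = i := fun i => e.apply_symm_apply i
  refine ⟨e.symm, fun i => f (delta i) (e.symm i), fun i => ?_, fun i => ?_,
    ‖(f : l2 →L[ℝ] l2)‖ + 1, by positivity, fun i => ?_⟩
  · have := hσ (e.symm i)
    rwa [he] at this
  · ext m
    rw [lp.coeFn_smul, Pi.smul_apply, delta_apply, smul_eq_mul]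
    split_ifs with h
    · rw [h, mul_one]
    · rw [mul_zero]
      refine huniq m i fun hi => h ?_
      rw [hi]
      exact (e.symm_apply_apply m).symm
  · have h1 := lp.norm_apply_le_norm (p := 2) (by norm_num) (f (delta i)) (e.symm i)
    have h2 := (f : l2 →L[ℝ] l2).le_opNorm (delta i)
    rw [norm_delta, mul_one] at h2
    rw [Real.norm_eq_abs] at h1
    exact (h1.trans h2).trans (by linarith)
end
end

section
/- Let G be a connected graph on ℕ with uniformly bounded degree and deg(i) ≥ 1 for all i, and let f be an isomorphism of Hilbert evolution algebras from A_RW(G) to A(G) of the form f(δ_i) = α_i δ_{π(i)} with α_i ≠ 0 and π : ℕ → ℕ a bijection. Define the twisted structure constants c̃_{ki} = (α_k / α_i²) · (a_{ki}/deg(i)) and the corresponding product (v ·̃ w)_k = ∑_i v_i w_i c̃_{ki} on ℓ²(ℕ). Then the linear isometric equivalence U : ℓ²(ℕ) → ℓ²(ℕ) determined by U(δ_i) = δ_{π(i)} is a unitary isomorphism of Hilbert evolution algebras from (ℓ²(ℕ), ·̃) onto A(G): U is a surjective linear isometry and U(v ·̃ w) = U(v) ⋆ U(w) for all v, w ∈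 ℓ²(ℕ). -/
/-! Write `A` for the adjacency matrix. Applying the homomorphism property to `δ_i ∘ δ_i` and
comparing coordinates gives `α_k a_{ki} / deg(i) = α_i² a_{π(k) π(i)}`, that is, the twisted
structure constant `c̃_{ki}` is the adjacency coefficient `a_{π(k) π(i)}` (`twisted_coeff`).
The twisted algebra is thus `A(G)` with its basis relabelled by `π`, and the permutation unitary `U`
intertwines the two products after reindexing the defining series by `π`.

The product of two vectors exists because `v w` is in `ℓ¹` and the columns of `A` are bounded in
`ℓ²` by the uniform degree bound, so `∑_i v_i w_i A δ_i` converges absolutely in `ℓ²`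
(`exists_starProd`). -/

noncomputable section
open scoped ENNReal

/-- `p` is the product `v ·̃ w` on ℓ²(ℕ) with the twisted structure constants
`c̃_{ki} = (α_k/α_i²)·(a_{ki}/deg(i))`: `p_k = ∑_i v_i w_i c̃_{ki}`. -/
def IsTildeProd (a : ℕ → ℕ → ℝ) (α : ℕ → ℝ) (v w p : l2) : Prop :=
  (∀ k, Summable fun i => v i * w i * (α k / α i ^ 2 * (a k i / deg a i))) ∧
  ∀ k, p k = ∑' i, v i * w i * (α k / α i ^ 2 * (a k i / deg a i))

/-- A continuous linear map that is a weighted permutation on the basis is one on coordinates. -/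
lemma weightedPerm_apply (T : l2 →L[ℝ] l2) (π : Equiv.Perm ℕ) (c : ℕ → ℝ)
    (hT : ∀ i, T (delta i) = c i • delta (π i)) (x : l2) (k : ℕ) :
    T x (π k) = c k * x k := by
  have hs : HasSum (fun i => lp.single 2 i (x i) : ℕ → l2) x :=
    lp.hasSum_single (by norm_num) x
  have h1 := (hs.mapL T).mapL (lp.evalCLM ℝ (fun _ : ℕ => ℝ) 2 (π k))
  refine h1.unique ?_
  have h2 : ∀ i, lp.evalCLM ℝ (fun _ : ℕ => ℝ) 2 (π k) (T (lp.single 2 i (x i)))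
      = if i = k then c k * x k else 0 := by
    intro i
    have : (lp.single 2 i (x i) : l2) = x i • delta i := by
      rw [delta, ← lp.single_smul]; simp
    rw [this, map_smul, hT]
    change x i * (c i * (delta (π i)) (π k)) = _
    rw [delta, lp.single_apply]
    by_cases h : i = k
    · subst h; simp [mul_comm]
    · have : π k ≠ π i := fun e => h (π.injective e).symm
      simp [h, this]
  simp_rw [h2]
  exact hasSum_ite_eq k _

/-- The permutation unitary `δ_i ↦ δ_{π(i)}`, as the inverse of the coordinate map of the
relabelled standard Hilbert basis. -/
lemma exists_permUnitary (π : Equiv.Perm ℕ) :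
    ∃ U : l2 ≃ₗᵢ[ℝ] l2, ∀ i, U (delta i) = delta (π i) := by
  let b : HilbertBasis ℕ ℝ l2 := HilbertBasis.ofRepr (LinearIsometryEquiv.refl ℝ l2)
  have hb : ∀ i, b i = delta i := fun i => (b.repr_symm_single i).symm
  have hsp : ⊤ ≤ (Submodule.span ℝ (Set.range (b ∘ π))).topologicalClosure := by
    rw [π.surjective.range_comp, b.dense_span]
  let b' := HilbertBasis.mk (b.orthonormal.comp π π.injective) hsp
  refine ⟨b'.repr.symm, fun i => ?_⟩
  have h : b'.repr.symm (delta i) = b' i := b'.repr_symm_single i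
  rw [h, HilbertBasis.coe_mk, Function.comp_apply, hb]

section columns

variable {a : ℕ → ℕ → ℝ}

lemma sq_adj (hadj : SimpleAdj a) (k i : ℕ) : a k i ^ 2 = a k i := by
  rcases hadj.1 k i with h | h <;> simp [h]

lemma memℓp_column (hadj : SimpleAdj a) (hlf : GraphLocallyFinite a) (i : ℕ) :
    Memℓp (fun k => a k i) 2 := by
  refine memℓp_gen ?_
  simpa [sq_adj hadj] using hlf i

/-- The column `A δ_i = δ_i ⋆ δ_i` of the adjacency matrix. -/
def column (hadj : SimpleAdj a) (hlf : GraphLocallyFinite a) (i : ℕ) : l2 :=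
  ⟨fun k => a k i, memℓp_column hadj hlf i⟩

lemma norm_sq_column (hadj : SimpleAdj a) (hlf : GraphLocallyFinite a) (i : ℕ) :
    ‖column hadj hlf i‖ ^ 2 = deg a i := by
  have h := lp.norm_rpow_eq_tsum (p := 2) (by norm_num) (column hadj hlf i)
  simp only [ENNReal.toReal_ofNat, Real.rpow_ofNat, Real.norm_eq_abs, sq_abs] at h
  rw [h, deg]
  exact tsum_congr fun k => sq_adj hadj k i

lemma summable_mul_l2 (v w : l2) : Summable fun i => v i * w i := by
  simpa [mul_comm] using lp.summable_inner (𝕜 := ℝ) v w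

lemma exists_starProd (hadj : SimpleAdj a) (hlf : GraphLocallyFinite a)
    (hubd : UnifBoundedDegree a) (v w : l2) : ∃ q : l2, IsStarProd a v w q := by
  obtain ⟨M, -, hM⟩ := hubd
  have hs : Summable fun i => (v i * w i) • column hadj hlf i := by
    refine Summable.of_norm_bounded (g := fun i => |v i * w i| * √M)
      ((summable_mul_l2 v w).abs.mul_right _) fun i => ?_
    rw [norm_smul, Real.norm_eq_abs]
    gcongr
    exact Real.le_sqrt_of_sq_le ((norm_sq_column hadj hlf i).trans_le (hM i))
  have hk : ∀ k, HasSum (fun i => v i * w i * a k i)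
      ((∑' i, (v i * w i) • column hadj hlf i : l2) k) := fun k =>
    hs.hasSum.mapL (lp.evalCLM ℝ (fun _ : ℕ => ℝ) 2 k)
  exact ⟨_, fun k => (hk k).summable, fun k => (hk k).tsum_eq.symm⟩

/-- If `v` and `w` are multiples of `δ_i`, a weighted sum over their product has one term. -/
lemma hasSum_delta (i : ℕ) (c d : ℝ) (g : ℕ → ℝ) :
    HasSum (fun j => (c • delta i) j * (d • delta i) j * g j) (c * d * g i) := by
  convert hasSum_ite_eq i (c * d * g i) using 2 with j
  rw [lp.coeFn_smul, lp.coeFn_smul, Pi.smul_apply, Pi.smul_apply, delta, lp.single_apply]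
  by_cases h : j = i
  · subst h; simp
  · simp [h]

/-- The twisted structure constants are the adjacency coefficients relabelled by `π`. -/
lemma twisted_coeff (hadj : SimpleAdj a) (hlf : GraphLocallyFinite a)
    (f : l2 ≃L[ℝ] l2) (π : Equiv.Perm ℕ) (α : ℕ → ℝ) (hα : ∀ i, α i ≠ 0)
    (hfδ : ∀ i, f (delta i) = α i • delta (π i))
    (hf : ∀ v w p q : l2, IsRWProd a v w p → IsStarProd a (f v) (f w) q → f p = q)
    (k i : ℕ) : α k / α i ^ 2 * (a k i / deg a i) = a (π k) (π i) := by
  have hrw : IsRWProd a (delta i) (delta i) ((deg a i)⁻¹ • column hadj hlf i) := by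
    have h (k : ℕ) : HasSum (fun j => delta i j * delta i j * (a k j / deg a j))
        (a k i / deg a i) := by
      simpa using hasSum_delta i 1 1 (fun j => a k j / deg a j)
    refine ⟨fun k => (h k).summable, fun k => ?_⟩
    rw [(h k).tsum_eq, div_eq_inv_mul]
    rfl
  have hst : IsStarProd a (f (delta i)) (f (delta i))
      ((α i * α i) • column hadj hlf (π i)) := by
    rw [hfδ]
    have h (k : ℕ) := hasSum_delta (π i) (α i) (α i) (a k)
    exact ⟨fun k => (h k).summable, fun k => (h k).tsum_eq.symm⟩
  have h := congrArg (fun x : l2 => x (π k)) (hf _ _ _ _ hrw hst)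
  have h' := weightedPerm_apply f.toContinuousLinearMap π α hfδ
    ((deg a i)⁻¹ • column hadj hlf i) k
  have e : α k * ((deg a i)⁻¹ * a k i) = α i * α i * a (π k) (π i) := h'.symm.trans h
  have := hα i
  rw [div_mul_eq_mul_div, div_eq_iff (pow_ne_zero 2 this), div_eq_inv_mul, e]
  ring

end columns

/-- given an isomorphism `f(δ_i) = α_i δ_{π(i)}` of Hilbert evolution
algebras from `A_RW(G)` to `A(G)`, the linear isometric equivalence `U` determined by
`U(δ_i) = δ_{π(i)}` is a unitary isomorphism of Hilbert evolution algebras from ℓ²(ℕ)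
with the twisted product `·̃` onto `A(G)`: `U(v ·̃ w) = U(v) ⋆ U(w)` for all `v, w`. -/
theorem twisted_unitary_iso
    (a : ℕ → ℕ → ℝ)
    (hadj : SimpleAdj a) (hconn : Connected a)
    (hlf : GraphLocallyFinite a) (hubd : UnifBoundedDegree a)
    (hdeg : ∀ i, 1 ≤ deg a i)
    (f : l2 ≃L[ℝ] l2) (π : Equiv.Perm ℕ) (α : ℕ → ℝ)
    (hα : ∀ i, α i ≠ 0)
    (hfδ : ∀ i, f (delta i) = α i • delta (π i))
    (hf : ∀ v w p q : l2, IsRWProd a v w p → IsStarProd a (f v) (f w) q → f p = q) :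
    ∃ U : l2 ≃ₗᵢ[ℝ] l2,
      (∀ i, U (delta i) = delta (π i)) ∧
      (∀ v w : l2, ∃ p : l2, IsTildeProd a α v w p) ∧
      (∀ v w p q : l2, IsTildeProd a α v w p → IsStarProd a (U v) (U w) q → U p = q) := by
  have hc := twisted_coeff hadj hlf f π α hα hfδ hf
  obtain ⟨U, hU⟩ := exists_permUnitary π
  have hUx : ∀ (x : l2) (k : ℕ), U x (π k) = x k := fun x k => by
    simpa using weightedPerm_apply U.toContinuousLinearEquiv.toContinuousLinearMap π (fun _ => 1)
      (fun i => by simpa using hU i) x k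
  have hre : ∀ (v w : l2) (k : ℕ),
      (fun i => v i * w i * (α k / α i ^ 2 * (a k i / deg a i))) =
        (fun j => U v j * U w j * a (π k) j) ∘ π := fun v w k => by
    funext i
    simp only [Function.comp_apply, hUx, hc]
  refine ⟨U, hU, fun v w => ?_, fun v w p q hp hq => ?_⟩
  · obtain ⟨q, hq⟩ := exists_starProd hadj hlf hubd (U v) (U w)
    refine ⟨U.symm q, fun k => ?_, fun k => ?_⟩
    · rw [hre, π.summable_iff]
      exact hq.1 (π k)
    · rw [hre, ← hUx, U.apply_symm_apply, hq.2]
      exact (π.tsum_eq _).symm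
  · ext j
    obtain ⟨k, rfl⟩ := π.surjective j
    rw [hUx, hp.2, hq.2, hre]
    exact π.tsum_eq (fun j => U v j * U w j * a (π k) j)
end
end
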